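/- Let k be a perfect field of characteristic p > 0, let m > 2, and let 1 < a_1 ≤ a_2 ≤ … ≤ a_{m−1} be fixed integers with (a_1, a_2) ≠ (2, 2). For each integer n ≥ a_{m−1} set f_n = x_1^{a_1} + x_2^{a_2} + … + x_{m−1}^{a_{m−1}} + x_m^n ∈ k[x_1, …, x_m]. If p ≥ a_1·a_2·(a_1 + a_2 + 1/a_1 + 1/a_2 − 4)/(a_1·a_2 − a_1 − a_2) and p ≡ −1 (mod lcm(a_1, a_2)), then for every n ≥ p one has fpt(f_n) = fpt(x_1^{a_1} + x_2^{a_2} + … + x_{m−1}^{a_{m−1}} + x_m^p). -/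

import Mathlib

/-!
Write `b_i` for the exponents of a diagonal polynomial `f = ∑ x_i ^ b_i` and
`T = min (∑ ⌊(p - 1) / b_i⌋, p - 1)`. Either of `∑ ⌊(p - 1) / b_i⌋ < N` and `p ≤ N` puts `f ^ N`
in `𝔪^[p]`, so `f ^ (T + 1) ∈ 𝔪^[p]`, and applying Frobenius, `f ^ ((T + 1) q) ∈ 𝔪^[pq]` for
`q = p ^ e`.

If two of the exponents, at `i ≠ j`, exceed `1` and divide `p + 1`, then conversely
`f ^ ((T + 1) q - 1) ∉ 𝔪^[pq]`. Indeed, choose `t_l ≤ (p - 1) / b_l` with `∑ t_l = T`. Since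
`b_i (t_i + 1)` and `b_j (t_j + 1)` are at most `p + 1`, there is room to distribute a further
`q - 1` between the coordinates `i` and `j` of `q t` without leaving the box `b_l κ_l < pq`. By
Lucas the resulting multinomial coefficient is prime to `p`, as no carry occurs.

Hence `fpt f = (T + 1) / p`, and an exponent `n ≥ p` contributes `⌊(p - 1) / n⌋ = 0` to `T`.
-/

open MvPolynomial Filter

/-- The `q`-th Frobenius power of the maximal ideal `(x_1, …, x_m)`. -/
noncomputable def frobeniusPower (k : Type*) [CommRing k] (m q : ℕ) :
    Ideal (MvPolynomial (Fin m) k) :=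
  Ideal.span (Set.range fun i : Fin m => (X i : MvPolynomial (Fin m) k) ^ q)

/-- `ν_f(q) = max { N : f^N ∉ (x_1^q, …, x_m^q) }`. -/
noncomputable def nu {k : Type*} [CommRing k] {m : ℕ}
    (f : MvPolynomial (Fin m) k) (q : ℕ) : ℕ :=
  sSup {N : ℕ | f ^ N ∉ frobeniusPower k m q}

section Binomial

variable {p : ℕ} [Fact p.Prime]

theorem choose_mul_pow_add_modEq {e r s : ℕ} (hr : r < p ^ e) (hs : s < p ^ e) (n k : ℕ) :
    (n * p ^ e + r).choose (k * p ^ e + s) ≡ n.choose k * r.choose s [MOD p] := by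
  have hp : 0 < p := (Fact.out : p.Prime).pos
  induction e generalizing r s with
  | zero =>
    obtain rfl : r = 0 := by simpa using hr
    obtain rfl : s = 0 := by simpa using hs
    simp [Nat.ModEq.refl]
  | succ e ih =>
    have mod_eq (a b : ℕ) : (a * p ^ (e + 1) + b) % p = b % p := by
      rw [pow_succ, ← mul_assoc, Nat.mul_add_mod_self_right]
    have div_eq (a b : ℕ) : (a * p ^ (e + 1) + b) / p = a * p ^ e + b / p := by
      rw [pow_succ, ← mul_assoc, add_comm, Nat.add_mul_div_right _ _ hp, add_comm]
    have hr' : r / p < p ^ e := Nat.div_lt_of_lt_mul (by rwa [← pow_succ'])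
    have hs' : s / p < p ^ e := Nat.div_lt_of_lt_mul (by rwa [← pow_succ'])
    calc (n * p ^ (e + 1) + r).choose (k * p ^ (e + 1) + s)
        ≡ (r % p).choose (s % p) * (n * p ^ e + r / p).choose (k * p ^ e + s / p) [MOD p] := by
          simpa only [mod_eq, div_eq] using Choose.choose_modEq_choose_mod_mul_choose_div_nat
            (n := n * p ^ (e + 1) + r) (k := k * p ^ (e + 1) + s) (p := p)
      _ ≡ (r % p).choose (s % p) * (n.choose k * (r / p).choose (s / p)) [MOD p] :=
          (ih hr' hs').mul_left _
      _ = n.choose k * ((r % p).choose (s % p) * (r / p).choose (s / p)) := mul_left_comm ..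
      _ ≡ n.choose k * r.choose s [MOD p] :=
          Choose.choose_modEq_choose_mod_mul_choose_div_nat.symm.mul_left _

theorem multinomial_mul_pow_add_modEq {ι : Type*} (s : Finset ι) {e : ℕ} (t r : ι → ℕ)
    (hr : ∑ i ∈ s, r i < p ^ e) :
    Nat.multinomial s (fun i => t i * p ^ e + r i) ≡
      Nat.multinomial s t * Nat.multinomial s r [MOD p] := by
  induction s using Finset.cons_induction with
  | empty => simp [Nat.ModEq.refl]
  | cons a s ha ih =>
    rw [Finset.sum_cons] at hr
    have hsum : t a * p ^ e + r a + ∑ i ∈ s, (t i * p ^ e + r i) =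
        (t a + ∑ i ∈ s, t i) * p ^ e + (r a + ∑ i ∈ s, r i) := by
      rw [Finset.sum_add_distrib, ← Finset.sum_mul]
      ring
    rw [Nat.multinomial_cons, Nat.multinomial_cons, Nat.multinomial_cons, hsum,
      mul_mul_mul_comm]
    exact (choose_mul_pow_add_modEq hr (by omega) _ _).mul (ih (by omega))

theorem not_dvd_multinomial_of_sum_lt {ι : Type*} {s : Finset ι} {t : ι → ℕ}
    (ht : ∑ i ∈ s, t i < p) : ¬ p ∣ Nat.multinomial s t := by
  intro h
  have hfac : p ∣ (∑ i ∈ s, t i).factorial :=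
    h.trans (Dvd.intro_left _ (Nat.multinomial_spec s t))
  exact ht.not_ge ((Fact.out : p.Prime).dvd_factorial.1 hfac)

theorem not_dvd_choose_of_add_one_eq_pow {n e : ℕ} (hn : n + 1 = p ^ e) {u : ℕ} (hu : u ≤ n) :
    ¬ p ∣ n.choose u := by
  have hp : p.Prime := Fact.out
  induction u with
  | zero => simpa using hp.one_lt.ne'
  | succ u ih =>
    -- Pascal's rule: the two neighbours add up to `(p ^ e).choose (u + 1)`, a multiple of `p`.
    have hsum : p ∣ n.choose u + n.choose (u + 1) := by
      rw [← Nat.choose_succ_succ' n u, hn]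
      exact hp.dvd_choose_pow (Nat.succ_ne_zero u) (by omega)
    exact fun h => ih (by omega) ((Nat.dvd_add_left h).1 hsum)

theorem multinomial_single_add_single {ι : Type*} [Fintype ι] [DecidableEq ι] {i j : ι}
    (hij : i ≠ j) (u v : ℕ) :
    Nat.multinomial Finset.univ (Pi.single i u + Pi.single j v) = (u + v).choose u := by
  rw [← Nat.multinomial_congr_of_sdiff (Finset.subset_univ {i, j}) _ fun _ _ => rfl,
    Nat.binomial_eq_choose hij]
  · simp [hij, hij.symm]
  · intro l hl
    simp_all

theorem not_dvd_multinomial_mul_pow_add_single {ι : Type*} [Fintype ι] [DecidableEq ι] {i j : ι}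
    (hij : i ≠ j) {t : ι → ℕ} (ht : ∑ l, t l < p) {e u v : ℕ} (huv : u + v + 1 = p ^ e) :
    ¬ p ∣ Nat.multinomial Finset.univ
      (fun l => t l * p ^ e + (Pi.single i u + Pi.single j v : ι → ℕ) l) := by
  have hr : ∑ l, (Pi.single i u + Pi.single j v : ι → ℕ) l < p ^ e := by
    simp only [Pi.add_apply, Finset.sum_add_distrib, Finset.sum_pi_single', Finset.mem_univ,
      if_true]
    omega
  rw [(multinomial_mul_pow_add_modEq _ t _ hr).dvd_iff dvd_rfl, (Fact.out : p.Prime).dvd_mul,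
    not_or, multinomial_single_add_single hij]
  exact ⟨not_dvd_multinomial_of_sum_lt ht,
    not_dvd_choose_of_add_one_eq_pow huv (Nat.le_add_right u v)⟩

end Binomial

section Arithmetic

theorem exists_le_sum_eq {ι : Type*} [Fintype ι] (d : ι → ℕ) {n : ℕ} (hn : n ≤ ∑ i, d i) :
    ∃ t : ι → ℕ, (∀ i, t i ≤ d i) ∧ ∑ i, t i = n := by
  obtain ⟨t, htd, ht⟩ := Finsupp.exists_le_degree_eq (Finsupp.equivFunOnFinite.symm d) n
    (by simpa [Finsupp.degree_eq_sum] using hn)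
  exact ⟨t, htd, by rw [← ht, Finsupp.degree_eq_sum]⟩

theorem not_dvd_pow_of_dvd_succ {b p : ℕ} (hb : 1 < b) (hbp : b ∣ p + 1) (e : ℕ) :
    ¬ b ∣ p ^ e := by
  have hcop : Nat.Coprime b (p ^ e) :=
    (Nat.Coprime.coprime_dvd_left hbp (by simp)).pow_right e
  exact fun h => hb.ne' (hcop.eq_one_of_dvd h)

-- The choice `v = ⌊q / b⌋` is the smallest for which `u = q - 1 - v` satisfies its bound.
theorem exists_add_add_one_eq_of_not_dvd {b c q : ℕ} (hb : 1 < b) (hc : 1 < c) (hbq : ¬ b ∣ q) :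
    ∃ u v, u + v + 1 = q ∧ b * u < (b - 1) * q ∧ c * v < (c - 1) * q := by
  obtain ⟨b, rfl⟩ := Nat.exists_eq_add_of_le' hb.le
  obtain ⟨c, rfl⟩ := Nat.exists_eq_add_of_le' hc.le
  have hlt : (b + 1) * (q / (b + 1)) < q :=
    (Nat.mul_div_le q _).lt_of_ne fun h => hbq (Dvd.intro _ h)
  have hgt : q < (b + 1) * (q / (b + 1) + 1) := Nat.lt_mul_div_succ q (by omega)
  generalize q / (b + 1) = v at hlt hgt
  obtain ⟨u, rfl⟩ : ∃ u, q = u + v + 1 :=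
    ⟨q - 1 - v, by have := Nat.le_mul_of_pos_left v hb.le; omega⟩
  have hvu : v ≤ u := by nlinarith
  refine ⟨u, v, rfl, ?_, ?_⟩ <;> rw [Nat.add_sub_cancel] <;> nlinarith

theorem mul_mul_add_lt_of_dvd_succ {p b t u q : ℕ} (hbp : b ∣ p + 1) (ht : t ≤ (p - 1) / b)
    (hu : b * u < (b - 1) * q) : b * (t * q + u) < p * q := by
  have hlt : b * t < p + 1 :=
    (Nat.mul_le_mul_left b ht).trans_lt ((Nat.mul_div_le _ _).trans_lt (by omega))
  have hle : b * t + b ≤ p + 1 :=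
    Nat.le_of_lt_add_of_dvd (by omega) (Nat.dvd_add (dvd_mul_right b t) dvd_rfl) hbp
  calc b * (t * q + u) = b * t * q + b * u := by ring
    _ < b * t * q + (b - 1) * q := by gcongr
    _ = (b * t + (b - 1)) * q := by ring
    _ ≤ p * q := Nat.mul_le_mul_right q (by omega)

end Arithmetic

section FrobeniusPower

variable {k : Type*} [CommRing k] {m : ℕ}

theorem X_pow_mem_frobeniusPower (i : Fin m) {q n : ℕ} (h : q ≤ n) :
    (X i : MvPolynomial (Fin m) k) ^ n ∈ frobeniusPower k m q :=
  Ideal.pow_mem_of_pow_mem _ (Ideal.subset_span ⟨i, rfl⟩) h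

theorem coeff_eq_zero_of_mem_frobeniusPower {q : ℕ} {g : MvPolynomial (Fin m) k}
    (hg : g ∈ frobeniusPower k m q) {s : Fin m →₀ ℕ} (hs : ∀ i, s i < q) : coeff s g = 0 := by
  obtain ⟨c, rfl⟩ := Ideal.mem_span_range_iff_exists_fun.1 hg
  rw [coeff_sum]
  refine Finset.sum_eq_zero fun i _ => ?_
  have hi : ¬ Finsupp.single i q ≤ s := fun h =>
    (hs i).not_ge (by simpa using h i)
  rw [X_pow_eq_monomial, coeff_mul_monomial', if_neg hi]

theorem pow_pow_mem_frobeniusPower {p : ℕ} [Fact p.Prime] [CharP k p] {q : ℕ}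
    {g : MvPolynomial (Fin m) k} (hg : g ∈ frobeniusPower k m q) (e : ℕ) :
    g ^ p ^ e ∈ frobeniusPower k m (q * p ^ e) := by
  suffices frobeniusPower k m q ≤
      (frobeniusPower k m (q * p ^ e)).comap (iterateFrobenius (MvPolynomial (Fin m) k) p e) from
    this hg
  refine Ideal.span_le.2 ?_
  rintro _ ⟨i, rfl⟩
  rw [SetLike.mem_coe, Ideal.mem_comap, iterateFrobenius_def, ← pow_mul]
  exact X_pow_mem_frobeniusPower i le_rfl

theorem nu_eq_of_notMem_of_mem {f : MvPolynomial (Fin m) k} {q N : ℕ}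
    (hN : f ^ N ∉ frobeniusPower k m q) (hN' : f ^ (N + 1) ∈ frobeniusPower k m q) :
    nu f q = N :=
  IsGreatest.csSup_eq ⟨hN, fun _ hM => not_lt.1 fun hlt => hM (Ideal.pow_mem_of_pow_mem _ hN' hlt)⟩

end FrobeniusPower

section Diagonal

/-- The diagonal polynomial `∑ x_i ^ b_i` with exponents `b`. -/
noncomputable def diagonalPoly (k : Type*) [CommRing k] {m : ℕ} (b : Fin m → ℕ) :
    MvPolynomial (Fin m) k :=
  ∑ i, X i ^ b i

/-- The number `T = min (∑ ⌊(p - 1) / b_i⌋, p - 1)`, an upper bound for `ν_f(p)` where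
`f = ∑ x_i ^ b_i`. The F-pure threshold of `f` will be `(T + 1) / p`. -/
def diagonalNu {m : ℕ} (p : ℕ) (b : Fin m → ℕ) : ℕ :=
  min (∑ i, (p - 1) / b i) (p - 1)

variable {k : Type*} [CommRing k] {m : ℕ} {b : Fin m → ℕ}

theorem diagonalNu_congr {p : ℕ} (hp : 0 < p) {c : Fin m → ℕ}
    (h : ∀ i, b i = c i ∨ p ≤ b i ∧ p ≤ c i) : diagonalNu p b = diagonalNu p c := by
  have hdiv (i : Fin m) : (p - 1) / b i = (p - 1) / c i := by
    obtain heq | ⟨hb, hc⟩ := h i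
    · rw [heq]
    · rw [Nat.div_eq_of_lt (by omega), Nat.div_eq_of_lt (by omega)]
  simp only [diagonalNu, hdiv]

theorem coeff_diagonalPoly_pow (hb : ∀ i, 0 < b i) (κ : Fin m → ℕ) :
    coeff (Finsupp.equivFunOnFinite.symm fun i => b i * κ i) (diagonalPoly k b ^ ∑ i, κ i) =
      (Nat.multinomial Finset.univ κ : k) := by
  have hterm (κ' : Fin m → ℕ) :
      (Nat.multinomial Finset.univ κ' : MvPolynomial (Fin m) k) * ∏ i, (X i ^ b i) ^ κ' i =
        monomial (Finsupp.equivFunOnFinite.symm fun i => b i * κ' i)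
          (Nat.multinomial Finset.univ κ' : k) := by
    rw [monomial_eq, Finsupp.prod_fintype _ _ fun _ => pow_zero _]
    simp [pow_mul]
  have hinj (κ' : Fin m → ℕ) (h : (fun i => b i * κ' i) = fun i => b i * κ i) : κ' = κ :=
    funext fun i => Nat.eq_of_mul_eq_mul_left (hb i) (congrFun h i)
  simp only [diagonalPoly, Finset.sum_pow_eq_sum_piAntidiag, hterm, coeff_sum, coeff_monomial,
    EmbeddingLike.apply_eq_iff_eq]
  rw [Finset.sum_eq_single κ (fun κ' _ hne => if_neg (mt (hinj κ') hne)) (by simp), if_pos rfl]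

theorem diagonalPoly_pow_notMem {p q : ℕ} [CharP k p] (hb : ∀ i, 0 < b i) {κ : Fin m → ℕ}
    (hκ : ∀ i, b i * κ i < q) (hmul : ¬ p ∣ Nat.multinomial Finset.univ κ) :
    diagonalPoly k b ^ ∑ i, κ i ∉ frobeniusPower k m q := by
  intro h
  have hzero := coeff_eq_zero_of_mem_frobeniusPower h
    (s := Finsupp.equivFunOnFinite.symm fun i => b i * κ i) hκ
  rw [coeff_diagonalPoly_pow hb] at hzero
  exact hmul ((CharP.cast_eq_zero_iff k p _).1 hzero)

theorem diagonalPoly_pow_mem_of_sum_div_lt (hb : ∀ i, 0 < b i) {q N : ℕ}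
    (hN : ∑ i, (q - 1) / b i < N) : diagonalPoly k b ^ N ∈ frobeniusPower k m q := by
  rw [diagonalPoly, Finset.sum_pow_eq_sum_piAntidiag]
  refine Ideal.sum_mem _ fun κ hκ => Ideal.mul_mem_left _ _ ?_
  have hsum : ∑ i, κ i = N := (Finset.mem_piAntidiag.1 hκ).1
  obtain ⟨i, hi, hlt⟩ := Finset.exists_lt_of_sum_lt (hN.trans_eq hsum.symm)
  rw [Nat.div_lt_iff_lt_mul (hb i)] at hlt
  refine Ideal.mem_of_dvd _ (Finset.dvd_prod_of_mem _ hi) ?_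
  rw [← pow_mul, mul_comm]
  exact X_pow_mem_frobeniusPower i (by omega)

variable {p : ℕ} [Fact p.Prime] [CharP k p]

theorem diagonalPoly_pow_char_mem (hb : ∀ i, 0 < b i) :
    diagonalPoly k b ^ p ∈ frobeniusPower k m p := by
  rw [diagonalPoly, sum_pow_char]
  refine Ideal.sum_mem _ fun i _ => ?_
  rw [← pow_mul]
  exact X_pow_mem_frobeniusPower i (Nat.le_mul_of_pos_left p (hb i))

theorem diagonalPoly_pow_succ_diagonalNu_mem (hb : ∀ i, 0 < b i) :
    diagonalPoly k b ^ (diagonalNu p b + 1) ∈ frobeniusPower k m p := by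
  obtain h | h := le_total (∑ i, (p - 1) / b i) (p - 1)
  · rw [diagonalNu, min_eq_left h]
    exact diagonalPoly_pow_mem_of_sum_div_lt hb (Nat.lt_succ_self _)
  · rw [diagonalNu, min_eq_right h, Nat.sub_add_cancel (Fact.out : p.Prime).one_le]
    exact diagonalPoly_pow_char_mem hb

theorem exists_box_sum_eq_not_dvd_multinomial {i j : Fin m} (hij : i ≠ j) (hi : 1 < b i)
    (hj : 1 < b j) (hip : b i ∣ p + 1) (hjp : b j ∣ p + 1) (e : ℕ) :
    ∃ κ : Fin m → ℕ, (∀ l, b l * κ l < p * p ^ e) ∧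
      ∑ l, κ l + 1 = (diagonalNu p b + 1) * p ^ e ∧ ¬ p ∣ Nat.multinomial Finset.univ κ := by
  have hp : 0 < p := (Fact.out : p.Prime).pos
  have hT : diagonalNu p b ≤ ∑ l, (p - 1) / b l := min_le_left _ _
  obtain ⟨t, ht, htT⟩ := exists_le_sum_eq (fun l => (p - 1) / b l) hT
  have htp : ∑ l, t l < p := htT.trans_lt ((min_le_right _ _).trans_lt (by omega))
  obtain ⟨u, v, huv, hu, hv⟩ :=
    exists_add_add_one_eq_of_not_dvd hi hj (not_dvd_pow_of_dvd_succ hi hip e)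
  have hmul := not_dvd_multinomial_mul_pow_add_single hij htp huv
  refine ⟨fun l => t l * p ^ e + (Pi.single i u + Pi.single j v : Fin m → ℕ) l, fun l => ?_, ?_,
    hmul⟩
  · obtain rfl | hli := eq_or_ne l i
    · simpa [hij] using mul_mul_add_lt_of_dvd_succ hip (ht l) hu
    obtain rfl | hlj := eq_or_ne l j
    · simpa [hli] using mul_mul_add_lt_of_dvd_succ hjp (ht l) hv
    have hlt : b l * t l < p :=
      (Nat.mul_le_mul_left _ (ht l)).trans_lt ((Nat.mul_div_le _ _).trans_lt (by omega))
    simpa [hli, hlj, mul_assoc] using Nat.mul_lt_mul_of_pos_right hlt (pow_pos hp e)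
  · simp only [Pi.add_apply, Finset.sum_add_distrib, ← Finset.sum_mul, htT, Finset.sum_pi_single',
      Finset.mem_univ, if_true, add_one_mul]
    omega

theorem nu_diagonalPoly (hb : ∀ l, 0 < b l) {i j : Fin m} (hij : i ≠ j) (hi : 1 < b i)
    (hj : 1 < b j) (hip : b i ∣ p + 1) (hjp : b j ∣ p + 1) (e : ℕ) :
    nu (diagonalPoly k b) (p ^ (e + 1)) = (diagonalNu p b + 1) * p ^ e - 1 := by
  obtain ⟨κ, hbox, hsum, hmul⟩ := exists_box_sum_eq_not_dvd_multinomial hij hi hj hip hjp e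
  rw [pow_succ', ← hsum, Nat.add_sub_cancel]
  refine nu_eq_of_notMem_of_mem (diagonalPoly_pow_notMem hb hbox hmul) ?_
  rw [hsum, pow_mul]
  exact pow_pow_mem_frobeniusPower (diagonalPoly_pow_succ_diagonalNu_mem hb) e

theorem tendsto_nu_diagonalPoly_div (hb : ∀ l, 0 < b l) {i j : Fin m} (hij : i ≠ j)
    (hi : 1 < b i) (hj : 1 < b j) (hip : b i ∣ p + 1) (hjp : b j ∣ p + 1) :
    Tendsto (fun e : ℕ => (nu (diagonalPoly k b) (p ^ (e + 1)) : ℝ) / (p : ℝ) ^ (e + 1)) atTop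
      (nhds ((diagonalNu p b + 1 : ℝ) / p)) := by
  have hp : p.Prime := Fact.out
  have hp0 : (p : ℝ) ≠ 0 := Nat.cast_ne_zero.2 hp.ne_zero
  have hinv : (p : ℝ)⁻¹ < 1 := inv_lt_one_of_one_lt₀ (Nat.one_lt_cast.2 hp.one_lt)
  have hnu (e : ℕ) : (nu (diagonalPoly k b) (p ^ (e + 1)) : ℝ) / (p : ℝ) ^ (e + 1) =
      (diagonalNu p b + 1 : ℝ) / p - (p : ℝ)⁻¹ ^ (e + 1) := by
    have hpos : 1 ≤ (diagonalNu p b + 1) * p ^ e := Nat.mul_pos (Nat.succ_pos _) (pow_pos hp.pos e)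
    rw [nu_diagonalPoly hb hij hi hj hip hjp, Nat.cast_sub hpos]
    push_cast
    rw [inv_pow, pow_succ]
    field_simp
  simp only [hnu]
  have hpow := (tendsto_pow_atTop_nhds_zero_of_lt_one (inv_nonneg.2 p.cast_nonneg) hinv).comp
    (tendsto_add_atTop_nat 1)
  simpa using hpow.const_sub ((diagonalNu p b + 1 : ℝ) / p)

end Diagonal

theorem stmt1_general {p m n i j : ℕ} (hp : p.Prime) {k : Type*} [CommRing k] [CharP k p]
    (a : ℕ → ℕ) (ha : ∀ l < m - 1, 0 < a l) (hij : i ≠ j) (him : i < m - 1) (hjm : j < m - 1)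
    (hai : 1 < a i) (haj : 1 < a j)
    (hpmod : (p : ℤ) ≡ -1 [ZMOD (Nat.lcm (a i) (a j) : ℤ)]) (hnp : p ≤ n) (F G : ℝ)
    (hF : Tendsto (fun e : ℕ =>
        (nu (∑ l : Fin m, (X l : MvPolynomial (Fin m) k) ^
            (if (l : ℕ) = m - 1 then n else a (l : ℕ))) (p ^ (e + 1)) : ℝ) /
          (p : ℝ) ^ (e + 1))
      atTop (nhds F))
    (hG : Tendsto (fun e : ℕ =>
        (nu (∑ l : Fin m, (X l : MvPolynomial (Fin m) k) ^
            (if (l : ℕ) = m - 1 then p else a (l : ℕ))) (p ^ (e + 1)) : ℝ) /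
          (p : ℝ) ^ (e + 1))
      atTop (nhds G)) :
    F = G := by
  have : Fact p.Prime := ⟨hp⟩
  let b (c : ℕ) (l : Fin m) : ℕ := if (l : ℕ) = m - 1 then c else a l
  have hlcm : Nat.lcm (a i) (a j) ∣ p + 1 :=
    Int.natCast_dvd_natCast.1 (by simpa using hpmod.symm.dvd)
  have hb {c : ℕ} (hc : p ≤ c) (l : Fin m) : 0 < b c l := by
    by_cases hl : (l : ℕ) = m - 1
    · simpa only [b, if_pos hl] using hp.pos.trans_le hc
    · simpa only [b, if_neg hl] using ha l (by omega)
  have hlim {c : ℕ} (hc : p ≤ c) :=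
    tendsto_nu_diagonalPoly_div (k := k) (hb hc) (i := ⟨i, by omega⟩) (j := ⟨j, by omega⟩)
      (by simpa using hij) (by simpa only [b, if_neg him.ne] using hai)
      (by simpa only [b, if_neg hjm.ne] using haj)
      (by simpa only [b, if_neg him.ne] using (Nat.dvd_lcm_left _ _).trans hlcm)
      (by simpa only [b, if_neg hjm.ne] using (Nat.dvd_lcm_right _ _).trans hlcm)
  have hT : diagonalNu p (b n) = diagonalNu p (b p) :=
    diagonalNu_congr hp.pos fun l => by
      by_cases hl : (l : ℕ) = m - 1 <;> simp [b, hl, hnp]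
  calc F = (diagonalNu p (b n) + 1 : ℝ) / p := tendsto_nhds_unique hF (hlim hnp)
    _ = (diagonalNu p (b p) + 1 : ℝ) / p := by rw [hT]
    _ = G := tendsto_nhds_unique (hlim le_rfl) hG

/-- Theorem (stabilization): under the hypotheses of Theorem `stmt0`, for every
`n ≥ p` one has `fpt(f_n) = fpt(x_1^{a_1} + … + x_{m-1}^{a_{m-1}} + x_m^p)`.
Here `F` is the F-pure threshold of `f_n` and `G` is the F-pure threshold of the
polynomial with last exponent `p`, each characterized as the limit of
`ν(p^e)/p^e`. -/
theorem stmt1 {p m n : ℕ} (hp : p.Prime) {k : Type*} [Field k] [PerfectField k]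
    [CharP k p] (hm : 2 < m) (a : ℕ → ℕ)
    (ha0 : 1 < a 0)
    (hmono : ∀ i j : ℕ, i ≤ j → j ≤ m - 2 → a i ≤ a j)
    (hne : ¬(a 0 = 2 ∧ a 1 = 2))
    (hn : a (m - 2) ≤ n)
    (hpge : ((a 0 : ℚ) * a 1 * ((a 0 : ℚ) + (a 1 : ℚ) + 1 / (a 0 : ℚ) + 1 / (a 1 : ℚ) - 4)) /
        ((a 0 : ℚ) * (a 1 : ℚ) - (a 0 : ℚ) - (a 1 : ℚ)) ≤ (p : ℚ))
    (hpmod : (p : ℤ) ≡ -1 [ZMOD (Nat.lcm (a 0) (a 1) : ℤ)])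
    (hnp : p ≤ n)
    (F G : ℚ)
    (hF : Tendsto (fun e : ℕ =>
        (nu (∑ i : Fin m, (X i : MvPolynomial (Fin m) k) ^
            (if (i : ℕ) = m - 1 then n else a (i : ℕ))) (p ^ (e + 1)) : ℝ) /
          (p : ℝ) ^ (e + 1))
      atTop (nhds (F : ℝ)))
    (hG : Tendsto (fun e : ℕ =>
        (nu (∑ i : Fin m, (X i : MvPolynomial (Fin m) k) ^
            (if (i : ℕ) = m - 1 then p else a (i : ℕ))) (p ^ (e + 1)) : ℝ) /
          (p : ℝ) ^ (e + 1))
      atTop (nhds (G : ℝ))) :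
    F = G := by
  have ha (l : ℕ) (hl : l < m - 1) : 1 < a l := ha0.trans_le (hmono 0 l l.zero_le (by omega))
  exact Rat.cast_injective (stmt1_general hp a (fun l hl => (ha l hl).le) zero_ne_one (by omega)
    (by omega) ha0 (ha 1 (by omega)) hpmod hnp F G hF hG)
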